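/- Let 𝓕 be a family of tournaments and let G be an n-vertex 𝓕-extremal graph. Then there exists an n-vertex complete multipartite graph G* that is 𝓕-extremal and satisfies |E(G*)| ≥ |E(G)|. -/

import Mathlib

open scoped Classical

noncomputable section

universe u

variable {V : Type u}

/-- An orientation of a simple graph `G`: a relation choosing exactly one
direction for each edge of `G`. -/
abbrev SimpleGraph.Orient (G : SimpleGraph V) : Type u :=
  {D : V → V → Prop // (∀ u v, D u v → G.Adj u v) ∧ ∀ u v, G.Adj u v → (D u v ↔ ¬ D v u)}

/-- A family of tournaments: for each `k`, a set of orientations of the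
complete graph on `k` vertices. -/
abbrev TournFamily : Type :=
  ∀ k : ℕ, Set ((⊤ : SimpleGraph (Fin k)).Orient)

/-- The orientation `D` of `G` contains a copy of the `k`-vertex tournament `T`. -/
def ContainsCopy {G : SimpleGraph V} (D : G.Orient) {k : ℕ}
    (T : (⊤ : SimpleGraph (Fin k)).Orient) : Prop :=
  ∃ φ : Fin k → V, Function.Injective φ ∧ ∀ i j, T.1 i j → D.1 (φ i) (φ j)

/-- The orientation `D` is `F`-free: it contains no copy of a member of `F`. -/
def FreeOrient {G : SimpleGraph V} (F : TournFamily) (D : G.Orient) : Prop :=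
  ∀ (k : ℕ) (T : (⊤ : SimpleGraph (Fin k)).Orient), T ∈ F k → ¬ ContainsCopy D T

/-- `D(G, F)`: the number of `F`-free orientations of the graph `G`. -/
def numOrient (G : SimpleGraph V) (F : TournFamily) : ℕ :=
  Nat.card {D : G.Orient // FreeOrient F D}

/-- `D(n, F)`: the maximum of `D(G, F)` over all `n`-vertex graphs `G`. -/
def maxOrient (n : ℕ) (F : TournFamily) : ℕ :=
  sSup (Set.range fun G : SimpleGraph (Fin n) => numOrient G F)

/-- A tournament is strongly connected if there is a directed path between
every ordered pair of vertices. -/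
def IsStrongTourn {k : ℕ} (T : (⊤ : SimpleGraph (Fin k)).Orient) : Prop :=
  ∀ u v : Fin k, Relation.ReflTransGen T.1 u v

/-- `𝓢 k`: the family of strongly connected tournaments on `k` vertices. -/
def SFam (k : ℕ) : TournFamily := fun m => {T | m = k ∧ IsStrongTourn T}

/-- `t r n`: the number of edges of the `r`-partite Turán graph on `n` vertices. -/
def turanNum (r n : ℕ) : ℕ := (SimpleGraph.turanGraph n r).edgeFinset.card

/-- `G` is `F`-extremal: it has the maximum number of `F`-free orientations among all
graphs on its (`n`-element) vertex set. -/
def IsExtremal {n : ℕ} (G : SimpleGraph (Fin n)) (F : TournFamily) : Prop :=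
  ∀ G' : SimpleGraph (Fin n), numOrient G' F ≤ numOrient G F

/-- A graph is complete multipartite if whenever `v` is non-adjacent to two vertices
`u` and `w`, the vertices `u` and `w` are also non-adjacent (equivalently, the
non-adjacency relation is an equivalence relation on the vertices). -/
def IsCompMultipartite (G : SimpleGraph V) : Prop :=
  ∀ u v w : V, u ≠ v → v ≠ w → ¬ G.Adj u v → ¬ G.Adj v w → ¬ G.Adj u w

/-!
Zykov symmetrization. Let `u` and `v` be distinct non-adjacent vertices of `G`. A copy of a
tournament spans a clique, which misses `u` or `v`, so an `F`-free orientation of `G` is the same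
thing as a pair of `F`-free orientations of `G - u` and `G - v` that agree on `G - u - v`. Hence
`numOrient G F = ∑ a_H * b_H` over the orientations `H` of `G - u - v`, where `a_H` and `b_H` count
the extensions of `H` to `G - u` and `G - v`. Making one of `u`, `v` a clone of the other turns this
sum into `∑ a_H ^ 2` or `∑ b_H ^ 2`, so by AM-GM both clonings of an extremal graph are extremal.

Among the extremal graphs take one with the most edges. Cloning shows that non-adjacent vertices
have equal degrees. If `u ≁ v ≁ w` but `u ∼ w`, then making `u` a clone of `v` keeps the number of
edges and the degree of `v`, but lowers the degree of `w`, although `v` and `w` stay non-adjacent.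
-/

section Pullback

variable {α β γ : Type*} [Finite α] [Finite β]

theorem card_pullback [Fintype γ] (f : α → γ) (g : β → γ) :
    Nat.card (f.Pullback g) = ∑ c, Nat.card (f ⁻¹' {c}) * Nat.card (g ⁻¹' {c}) := by
  let e : f.Pullback g ≃ Σ c, (f ⁻¹' {c}) × (g ⁻¹' {c}) :=
    { toFun := fun p => ⟨f p.1.1, ⟨p.1.1, rfl⟩, ⟨p.1.2, p.2.symm⟩⟩
      invFun := fun q => ⟨(q.2.1, q.2.2), q.2.1.2.trans q.2.2.2.symm⟩
      left_inv := fun _ => rfl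
      right_inv := by rintro ⟨_, ⟨a, rfl⟩, b⟩; rfl }
  simp only [Nat.card_congr e, Nat.card_sigma, Nat.card_prod]

theorem two_mul_card_pullback_le [Finite γ] (f : α → γ) (g : β → γ) :
    2 * Nat.card (f.Pullback g) ≤ Nat.card f.PullbackSelf + Nat.card g.PullbackSelf := by
  have := Fintype.ofFinite γ
  simp only [Function.PullbackSelf, card_pullback, Finset.mul_sum, ← Finset.sum_add_distrib,
    ← mul_assoc, ← sq]
  exact Finset.sum_le_sum fun c _ => two_mul_le_add_sq _ _

end Pullback

section Orientation

variable {G G₁ G₂ H : SimpleGraph V} {F : TournFamily} {k : ℕ}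
  {T : (⊤ : SimpleGraph (Fin k)).Orient}

/-- The restriction of an orientation of `G` to a spanning subgraph `H`. -/
def restrictOrient (h : H ≤ G) (D : G.Orient) : H.Orient :=
  ⟨fun x y => H.Adj x y ∧ D.1 x y, fun _ _ hxy => hxy.1, fun x y hxy => by
    simpa [hxy, hxy.symm] using D.2.2 x y (h hxy)⟩

theorem exists_restrictOrient_eq (D₁ : G₁.Orient) (D₂ : G₂.Orient)
    (h : restrictOrient inf_le_left D₁ = restrictOrient (inf_le_right : G₁ ⊓ G₂ ≤ G₂) D₂) :
    ∃ D : (G₁ ⊔ G₂).Orient,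
      restrictOrient le_sup_left D = D₁ ∧ restrictOrient le_sup_right D = D₂ := by
  have agree (x y) (h₁ : G₁.Adj x y) (h₂ : G₂.Adj x y) : D₁.1 x y ↔ D₂.1 x y := by
    simpa [restrictOrient, h₁, h₂] using congrFun₂ (congrArg Subtype.val h) x y
  have eq₁ (x y) (h₁ : G₁.Adj x y) : D₁.1 x y ∨ D₂.1 x y ↔ D₁.1 x y :=
    or_iff_left_of_imp fun h => (agree x y h₁ (D₂.2.1 x y h)).2 h
  have eq₂ (x y) (h₂ : G₂.Adj x y) : D₁.1 x y ∨ D₂.1 x y ↔ D₂.1 x y :=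
    or_iff_right_of_imp fun h => (agree x y (D₁.2.1 x y h) h₂).1 h
  refine ⟨⟨fun x y => D₁.1 x y ∨ D₂.1 x y, fun x y => Or.imp (D₁.2.1 x y) (D₂.2.1 x y), ?_⟩, ?_, ?_⟩
  · rintro x y (hxy | hxy) <;> beta_reduce
    · rw [eq₁ x y hxy, eq₁ y x hxy.symm, D₁.2.2 x y hxy]
    · rw [eq₂ x y hxy, eq₂ y x hxy.symm, D₂.2.2 x y hxy]
  · ext x y
    exact (and_congr_right (eq₁ x y)).trans (and_iff_right_of_imp (D₁.2.1 x y))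
  · ext x y
    exact (and_congr_right (eq₂ x y)).trans (and_iff_right_of_imp (D₂.2.1 x y))

theorem orient_ext_of_restrictOrient_eq {D E : (G₁ ⊔ G₂).Orient}
    (h₁ : restrictOrient le_sup_left D = restrictOrient (le_sup_left : G₁ ≤ G₁ ⊔ G₂) E)
    (h₂ : restrictOrient le_sup_right D = restrictOrient (le_sup_right : G₂ ≤ G₁ ⊔ G₂) E) :
    D = E := by
  have agree (x y) (hxy : (G₁ ⊔ G₂).Adj x y) : D.1 x y ↔ E.1 x y := by
    rcases hxy with hxy | hxy
    · simpa [restrictOrient, hxy] using congrFun₂ (congrArg Subtype.val h₁) x y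
    · simpa [restrictOrient, hxy] using congrFun₂ (congrArg Subtype.val h₂) x y
  ext x y
  exact ⟨fun h => (agree x y (D.2.1 x y h)).1 h, fun h => (agree x y (E.2.1 x y h)).2 h⟩

theorem isClique_range_of_copy {D : G.Orient} {φ : Fin k → V}
    (hφ : ∀ i j, T.1 i j → D.1 (φ i) (φ j)) : G.IsClique (Set.range φ) := by
  rintro _ ⟨i, rfl⟩ _ ⟨j, rfl⟩ hij
  have hT := T.2.2 i j fun h => hij (congrArg φ h)
  by_cases h : T.1 i j
  · exact D.2.1 _ _ (hφ i j h)
  · exact (D.2.1 _ _ (hφ j i (not_not.1 (mt hT.2 h)))).symm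

theorem FreeOrient.restrict {D : G.Orient} (hD : FreeOrient F D) (h : H ≤ G) :
    FreeOrient F (restrictOrient h D) :=
  fun k T hT ⟨φ, hφ, hcopy⟩ => hD k T hT ⟨φ, hφ, fun i j hij => (hcopy i j hij).2⟩

theorem FreeOrient.of_restrictOrient {D : G.Orient} (h₁ : G₁ ≤ G) (h₂ : G₂ ≤ G)
    (hcl : ∀ s, G.IsClique s → G₁.IsClique s ∨ G₂.IsClique s)
    (hD₁ : FreeOrient F (restrictOrient h₁ D))
    (hD₂ : FreeOrient F (restrictOrient h₂ D)) : FreeOrient F D := by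
  rintro k T hT ⟨φ, hφ, hcopy⟩
  have hne {i j} (hij : T.1 i j) : φ i ≠ φ j := hφ.ne (T.2.1 i j hij)
  rcases hcl _ (isClique_range_of_copy hcopy) with hs | hs
  · exact hD₁ k T hT ⟨φ, hφ, fun i j hij => ⟨hs ⟨i, rfl⟩ ⟨j, rfl⟩ (hne hij), hcopy i j hij⟩⟩
  · exact hD₂ k T hT ⟨φ, hφ, fun i j hij => ⟨hs ⟨i, rfl⟩ ⟨j, rfl⟩ (hne hij), hcopy i j hij⟩⟩

end Orientation

/-- The `F`-free orientations of `G`, as a type; `numOrient G F` is its cardinality. -/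
abbrev FreeOrientation (G : SimpleGraph V) (F : TournFamily) : Type u :=
  {D : G.Orient // FreeOrient F D}

namespace FreeOrientation

variable {G G₁ G₂ H K : SimpleGraph V} {F : TournFamily}

/-- The restriction of an `F`-free orientation of `G` to a spanning subgraph `H`. -/
def restrict (h : H ≤ G) (D : FreeOrientation G F) : FreeOrientation H F :=
  ⟨restrictOrient h D.1, D.2.restrict h⟩

/-- Transport of `F`-free orientations along a bijection `σ` of the vertices. -/
def comapEquiv {W : Type*} (σ : W ≃ V) :
    FreeOrientation G F ≃ FreeOrientation (G.comap σ) F where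
  toFun D := ⟨⟨fun x y => D.1.1 (σ x) (σ y), fun _ _ => D.1.2.1 _ _, fun _ _ => D.1.2.2 _ _⟩,
    fun k T hT ⟨φ, hφ, hcopy⟩ => D.2 k T hT ⟨σ ∘ φ, σ.injective.comp hφ, hcopy⟩⟩
  invFun E := ⟨⟨fun x y => E.1.1 (σ.symm x) (σ.symm y),
      fun _ _ h => by simpa using E.1.2.1 _ _ h,
      fun _ _ h => E.1.2.2 _ _ (by simpa using h)⟩,
    fun k T hT ⟨φ, hφ, hcopy⟩ => E.2 k T hT ⟨σ.symm ∘ φ, σ.symm.injective.comp hφ, hcopy⟩⟩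
  left_inv D := by simp
  right_inv E := by simp

theorem restrict_comapEquiv {σ : Equiv.Perm V} (h : K ≤ G) (hσ : K ≤ G.comap σ)
    (hfix : ∀ x ∈ K.support, σ x = x) (D : FreeOrientation G F) :
    restrict hσ (comapEquiv σ D) = restrict h D := by
  ext x y
  refine and_congr_right fun hxy => ?_
  simp [comapEquiv, hfix x ⟨y, hxy⟩, hfix y ⟨x, hxy.symm⟩]

theorem restrict_restrict (hK : K ≤ H) (h : H ≤ G) (D : FreeOrientation G F) :
    (D.restrict h).restrict hK = D.restrict (hK.trans h) := by
  ext x y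
  exact and_congr_right fun hxy => and_iff_right (hK hxy)

/-- The pair of restrictions of an `F`-free orientation of `G₁ ⊔ G₂` to `G₁` and `G₂`, as an element
of the fibre product over the `F`-free orientations of `G₁ ⊓ G₂`. -/
def restrictPair (D : FreeOrientation (G₁ ⊔ G₂) F) :
    (restrict inf_le_left : FreeOrientation G₁ F → FreeOrientation (G₁ ⊓ G₂) F).Pullback
      (restrict inf_le_right : FreeOrientation G₂ F → FreeOrientation (G₁ ⊓ G₂) F) :=
  ⟨(D.restrict le_sup_left, D.restrict le_sup_right), by simp only [restrict_restrict]⟩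

theorem restrictPair_bijective
    (hcl : ∀ s, (G₁ ⊔ G₂).IsClique s → G₁.IsClique s ∨ G₂.IsClique s) :
    Function.Bijective (restrictPair : FreeOrientation (G₁ ⊔ G₂) F → _) := by
  constructor
  · intro D E h
    have hpair := Prod.ext_iff.1 (congrArg Subtype.val h)
    exact Subtype.ext <| orient_ext_of_restrictOrient_eq (congrArg Subtype.val hpair.1)
      (congrArg Subtype.val hpair.2)
  · rintro ⟨⟨⟨D₁, hD₁⟩, ⟨D₂, hD₂⟩⟩, h⟩
    obtain ⟨D, rfl, rfl⟩ := exists_restrictOrient_eq D₁ D₂ (congrArg Subtype.val h)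
    exact ⟨⟨D, .of_restrictOrient le_sup_left le_sup_right hcl hD₁ hD₂⟩, rfl⟩

end FreeOrientation

section numOrient

open FreeOrientation

variable {G G₁ G₂ H K : SimpleGraph V} (F : TournFamily)

theorem numOrient_eq_card_pullback (hG : G = G₁ ⊔ G₂) (hK : K = G₁ ⊓ G₂)
    (hcl : ∀ s, G.IsClique s → G₁.IsClique s ∨ G₂.IsClique s) :
    numOrient G F =
      Nat.card ((restrict (F := F) (hK.trans_le inf_le_left)).Pullback
        (restrict (F := F) (hK.trans_le inf_le_right))) := by
  subst hG hK
  exact Nat.card_eq_of_bijective _ (restrictPair_bijective hcl)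

theorem numOrient_eq_card_pullbackSelf {σ : Equiv.Perm V} (hG : G = H ⊔ H.comap σ)
    (hK : K = H ⊓ H.comap σ) (hcl : ∀ s, G.IsClique s → H.IsClique s ∨ (H.comap σ).IsClique s)
    (hfix : ∀ x ∈ K.support, σ x = x) :
    numOrient G F = Nat.card (restrict (F := F) (hK.trans_le inf_le_left)).PullbackSelf := by
  rw [numOrient_eq_card_pullback F hG hK hcl]
  refine (Nat.card_congr <| ((Equiv.refl _).prodCongr (comapEquiv σ)).subtypeEquiv fun p => ?_).symm
  rw [Equiv.prodCongr_apply, Prod.map_snd, restrict_comapEquiv (hK.trans_le inf_le_left) _ hfix]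
  rfl

end numOrient

section deleteIncidenceSet

variable {G : SimpleGraph V} {u v : V}

theorem deleteIncidenceSet_sup_deleteIncidenceSet (huv : u ≠ v) (hadj : ¬ G.Adj u v) :
    G.deleteIncidenceSet u ⊔ G.deleteIncidenceSet v = G := by
  ext x y
  simp only [SimpleGraph.sup_adj, SimpleGraph.deleteIncidenceSet_adj]
  grind [G.adj_comm]

theorem isClique_deleteIncidenceSet {A : Set V} (hA : G.IsClique A) (hu : u ∉ A) :
    (G.deleteIncidenceSet u).IsClique A := fun _ hx _ hy hxy =>
  SimpleGraph.deleteIncidenceSet_adj.2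
    ⟨hA hx hy hxy, ne_of_mem_of_not_mem hx hu, ne_of_mem_of_not_mem hy hu⟩

theorem isClique_deleteIncidenceSet_or (huv : u ≠ v) (hadj : ¬ G.Adj u v) {A : Set V}
    (hA : G.IsClique A) :
    (G.deleteIncidenceSet u).IsClique A ∨ (G.deleteIncidenceSet v).IsClique A :=
  (not_and_or.1 fun h => hadj (hA h.1 h.2 huv)).imp (isClique_deleteIncidenceSet hA)
    (isClique_deleteIncidenceSet hA)

end deleteIncidenceSet

section replaceVertex

variable [DecidableEq V] {G K : SimpleGraph V} {s t : V}

theorem deleteIncidenceSet_replaceVertex_right :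
    (G.replaceVertex s t).deleteIncidenceSet t = G.deleteIncidenceSet t := by
  ext x y
  simp +contextual [SimpleGraph.deleteIncidenceSet_adj, SimpleGraph.replaceVertex]

theorem deleteIncidenceSet_replaceVertex_left :
    (G.replaceVertex s t).deleteIncidenceSet s =
      (G.deleteIncidenceSet t).comap (Equiv.swap s t) := by
  ext x y
  simp only [SimpleGraph.deleteIncidenceSet_adj, SimpleGraph.replaceVertex,
    SimpleGraph.comap_adj, Equiv.swap_apply_def]
  grind [SimpleGraph.irrefl, G.adj_comm]

theorem deleteIncidenceSet_inf_comap_swap :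
    G.deleteIncidenceSet t ⊓ (G.deleteIncidenceSet t).comap (Equiv.swap s t) =
      G.deleteIncidenceSet t ⊓ G.deleteIncidenceSet s := by
  ext x y
  simp only [SimpleGraph.inf_adj, SimpleGraph.deleteIncidenceSet_adj, SimpleGraph.comap_adj,
    Equiv.swap_apply_def]
  grind

theorem numOrient_replaceVertex (F : TournFamily) (hst : s ≠ t)
    (hK : K = G.deleteIncidenceSet t ⊓ G.deleteIncidenceSet s) :
    numOrient (G.replaceVertex s t) F =
      Nat.card (FreeOrientation.restrict (F := F) (hK.trans_le inf_le_left)).PullbackSelf := by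
  have hadj : ¬ (G.replaceVertex s t).Adj t s := fun h => G.not_adj_replaceVertex_same s t h.symm
  have hsup := deleteIncidenceSet_sup_deleteIncidenceSet hst.symm hadj
  have hcl (A) := isClique_deleteIncidenceSet_or (A := A) hst.symm hadj
  rw [deleteIncidenceSet_replaceVertex_right, deleteIncidenceSet_replaceVertex_left] at hsup hcl
  refine numOrient_eq_card_pullbackSelf F hsup.symm
    (hK.trans deleteIncidenceSet_inf_comap_swap.symm) hcl ?_
  rintro x ⟨y, hxy⟩
  simp only [hK, SimpleGraph.inf_adj, SimpleGraph.deleteIncidenceSet_adj] at hxy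
  exact Equiv.swap_apply_of_ne_of_ne hxy.2.2.1 hxy.1.2.1

theorem two_mul_numOrient_le [Finite V] (F : TournFamily) (hadj : ¬ G.Adj s t) :
    2 * numOrient G F ≤ numOrient (G.replaceVertex t s) F + numOrient (G.replaceVertex s t) F := by
  obtain rfl | hst := eq_or_ne s t
  · rw [G.replaceVertex_self, two_mul]
  · rw [numOrient_eq_card_pullback F
        (deleteIncidenceSet_sup_deleteIncidenceSet hst hadj).symm rfl
        fun _ => isClique_deleteIncidenceSet_or hst hadj,
      numOrient_replaceVertex F hst.symm rfl, numOrient_replaceVertex F hst (inf_comm _ _)]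
    exact two_mul_card_pullback_le _ _

end replaceVertex

section Symmetrization

variable [DecidableEq V]

/-- A class of graphs on `V` is clone-closed if it is preserved by Zykov symmetrization, which turns
a vertex `t` into a twin of a vertex `s` not adjacent to it. -/
def IsCloneClosed (P : SimpleGraph V → Prop) : Prop :=
  ∀ ⦃G⦄, P G → ∀ ⦃s t⦄, ¬ G.Adj s t → P (G.replaceVertex s t)

theorem isCloneClosed_maximal_numOrient [Finite V] (F : TournFamily) :
    IsCloneClosed fun G : SimpleGraph V =>
      ∀ G' : SimpleGraph V, numOrient G' F ≤ numOrient G F := by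
  intro G hG s t hadj G'
  have hsum := two_mul_numOrient_le F hadj
  have hclone := hG (G.replaceVertex t s)
  have hG' := hG G'
  lia

variable {G : SimpleGraph V} {P : SimpleGraph V → Prop} {s t w : V}

theorem degree_replaceVertex_left [Fintype (G.neighborSet s)]
    [Fintype ((G.replaceVertex s t).neighborSet s)] (hadj : ¬ G.Adj s t) :
    (G.replaceVertex s t).degree s = G.degree s := by
  simp only [← SimpleGraph.card_neighborFinset_eq_degree]
  congr 1
  ext x
  rw [SimpleGraph.mem_neighborFinset, SimpleGraph.mem_neighborFinset]
  obtain rfl | hx := eq_or_ne x t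
  · exact iff_of_false (G.not_adj_replaceVertex_same s x) hadj
  · exact G.adj_replaceVertex_iff_of_ne_left s hx

theorem degree_replaceVertex_lt [Fintype (G.neighborSet w)]
    [Fintype ((G.replaceVertex s t).neighborSet w)] (hs : ¬ G.Adj s w) (ht : G.Adj t w) :
    (G.replaceVertex s t).degree w < G.degree w := by
  have hwt : ¬ (G.replaceVertex s t).Adj w t := by
    rwa [SimpleGraph.adj_comm, G.adj_replaceVertex_iff_of_ne_right s ht.ne']
  simp only [← SimpleGraph.card_neighborFinset_eq_degree]
  refine Finset.card_lt_card <| (Finset.ssubset_iff_of_subset fun x hx => ?_).2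
    ⟨t, by simpa using ht.symm, by simpa using hwt⟩
  rw [SimpleGraph.mem_neighborFinset] at hx ⊢
  exact (G.adj_replaceVertex_iff_of_ne s ht.ne' (by rintro rfl; exact hwt hx)).1 hx

variable [Fintype V]

theorem IsCloneClosed.degree_le [DecidableRel G.Adj] (hP : IsCloneClosed P) (hG : P G)
    (hmax : ∀ G', P G' → G'.edgeFinset.card ≤ G.edgeFinset.card) (hadj : ¬ G.Adj s t) :
    G.degree s ≤ G.degree t := by
  have hcard := G.card_edgeFinset_replaceVertex_of_not_adj hadj
  have hle : (G.replaceVertex s t).edgeFinset.card ≤ G.edgeFinset.card := by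
    convert hmax _ (hP hG hadj)
  have := G.degree_le_card_edgeFinset t
  lia

theorem IsCloneClosed.isCompMultipartite (hP : IsCloneClosed P) (hG : P G)
    (hmax : ∀ G', P G' → G'.edgeFinset.card ≤ G.edgeFinset.card) : IsCompMultipartite G := by
  intro u v w _ _ huv hvw huw
  have hvu : ¬ G.Adj v u := fun h => huv h.symm
  have hwv : ¬ G.Adj w v := fun h => hvw h.symm
  have hdeg : G.degree v = G.degree u :=
    (hP.degree_le hG hmax hvu).antisymm (hP.degree_le hG hmax huv)
  have hcard : (G.replaceVertex v u).edgeFinset.card = G.edgeFinset.card := by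
    rw [G.card_edgeFinset_replaceVertex_of_not_adj hvu, hdeg, Nat.add_sub_cancel]
  have hvw' : ¬ (G.replaceVertex v u).Adj v w := by
    rwa [G.adj_replaceVertex_iff_of_ne_left v huw.ne']
  refine lt_irrefl (G.degree v) ?_
  calc
    G.degree v = (G.replaceVertex v u).degree v := (degree_replaceVertex_left hvu).symm
    _ ≤ (G.replaceVertex v u).degree w :=
      hP.degree_le (hP hG hvu) (fun H hH => (hmax H hH).trans hcard.ge) hvw'
    _ < G.degree w := degree_replaceVertex_lt hvw huw
    _ ≤ G.degree v := hP.degree_le hG hmax hwv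

theorem IsCloneClosed.exists_isCompMultipartite (hP : IsCloneClosed P) (hG : P G) :
    ∃ G', IsCompMultipartite G' ∧ P G' ∧ G.edgeFinset.card ≤ G'.edgeFinset.card := by
  obtain ⟨M, hM, hmax⟩ := Set.exists_max_image {G' | P G'} (fun G' => G'.edgeFinset.card)
    (Set.toFinite _) ⟨G, hG⟩
  exact ⟨M, hP.isCompMultipartite hM hmax, hM, hmax G hG⟩

end Symmetrization

theorem exists_isExtremal_isCompMultipartite_general [Fintype V] (G : SimpleGraph V)
    (F : TournFamily) (hG : ∀ H : SimpleGraph V, numOrient H F ≤ numOrient G F) :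
    ∃ G' : SimpleGraph V, IsCompMultipartite G' ∧
      (∀ H : SimpleGraph V, numOrient H F ≤ numOrient G' F) ∧
      G.edgeFinset.card ≤ G'.edgeFinset.card :=
  (isCloneClosed_maximal_numOrient F).exists_isCompMultipartite hG

/-- For every `F`-extremal graph `G` on `n` vertices there is an `F`-extremal complete
multipartite graph on `n` vertices with at least as many edges as `G`. -/
theorem exists_isExtremal_isCompMultipartite {n : ℕ} (G : SimpleGraph (Fin n))
    (F : TournFamily) (hG : IsExtremal G F) :
    ∃ G' : SimpleGraph (Fin n), IsCompMultipartite G' ∧ IsExtremal G' F ∧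
      G.edgeFinset.card ≤ G'.edgeFinset.card := by
  exact exists_isExtremal_isCompMultipartite_general G F hG
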